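/- Let f : ℕ → ℤ be a multiplicative function taking values in {-1, 1} such that f(2^k) = 1 for some integer k ≥ 1, and let c ∈ [-1, 0) be a real number. Suppose ∑_{p ≤ x} f(p) = c·(x/log x)·(1 + o(1)) as x → ∞, the sum running over primes p. Then the partial sums of μ·f are unbounded: lim sup_{N→∞} |∑_{n=1}^{N} μ(n) f(n)| = ∞, where μ is the Möbius function. -/

import Mathlib

open Filter Asymptotics

lemma aux_abel (a w : ℕ → ℝ) (K : ℝ) (hK : ∀ N, -K ≤ ∑ i ∈ Finset.range N, a i)
    (hw : Antitone w) (hw0 : ∀ n, 0 ≤ w n) (N : ℕ) :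
    -K * w 0 ≤ ∑ i ∈ Finset.range N, a i * w i := by
  have key : ∀ N, -K * w 0 + (∑ i ∈ Finset.range N, a i + K) * w N
      ≤ ∑ i ∈ Finset.range N, a i * w i := by
    intro N
    induction N with
    | zero => simp
    | succ n ih =>
      rw [Finset.sum_range_succ (fun i => a i * w i)]
      have h1 := hK (n + 1)
      have h2 := hw (Nat.le_succ n)
      have h3 : (∑ i ∈ Finset.range (n + 1), a i + K) * w (n + 1) ≤
          (∑ i ∈ Finset.range (n + 1), a i + K) * w n :=
        mul_le_mul_of_nonneg_left h2 (by linarith)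
      rw [Finset.sum_range_succ] at h3 ⊢
      linarith
  have h1 := key N
  have h2 : 0 ≤ (∑ i ∈ Finset.range N, a i + K) * w N :=
    mul_nonneg (by linarith [hK N]) (hw0 N)
  linarith

lemma aux_exp {x : ℝ} (hx : -(1 / 2) ≤ x) : Real.exp (x - 2 * x ^ 2) ≤ 1 + x := by
  have h : 0 < 1 + x := by linarith
  rw [← Real.le_log_iff_exp_le h]
  refine le_trans ?_ (Real.one_sub_inv_le_log_of_pos h)
  have : 1 - (1 + x)⁻¹ - (x - 2 * x ^ 2) = x ^ 2 * (1 + 2 * x) / (1 + x) := by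
    field_simp
    ring
  have h2 : 0 ≤ x ^ 2 * (1 + 2 * x) / (1 + x) :=
    div_nonneg (mul_nonneg (sq_nonneg x) (by linarith)) h.le
  linarith

/-- The weight `n ^ (-s)`, with value `1` at `0`. -/
noncomputable def auxW (s : ℝ) (n : ℕ) : ℝ := (max (n : ℝ) 1) ^ (-s)

lemma auxW_anti {s : ℝ} (hs : 0 ≤ s) : Antitone (auxW s) := by
  intro a b hab
  unfold auxW
  apply Real.rpow_le_rpow_of_nonpos (by positivity) _ (by linarith)
  exact max_le_max_right _ (by exact_mod_cast hab)

lemma auxW_nonneg (s : ℝ) (n : ℕ) : 0 ≤ auxW s n := by unfold auxW; positivity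

lemma auxW_zero (s : ℝ) : auxW s 0 = 1 := by simp [auxW]

lemma auxW_eq (s : ℝ) {n : ℕ} (hn : 1 ≤ n) : auxW s n = (n : ℝ) ^ (-s) := by
  unfold auxW
  rw [max_eq_left (by exact_mod_cast hn)]

/-- Euler product lower bound versus bounded partial sums. -/
lemma aux_main (g : ℕ → ℝ) (g0 : g 0 = 0) (g1 : g 1 = 1)
    (gmul : ∀ {a b : ℕ}, Nat.Coprime a b → g (a * b) = g a * g b)
    (gabs : ∀ n, |g n| ≤ 1) (gpow : ∀ p : ℕ, p.Prime → ∀ e, 2 ≤ e → g (p ^ e) = 0)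
    (C : ℝ) (hC : ∀ N, ∑ i ∈ Finset.range N, g i ≤ C)
    (δ K : ℝ) (hδ : 0 < δ)
    (hK : ∀ N, -K ≤ ∑ i ∈ Finset.range N, (if i.Prime then g i - δ else 0)) : False := by
  obtain ⟨Z, hZ⟩ : ∃ Z : ℝ, ∀ N, ∑ i ∈ Finset.range N, 1 / (i : ℝ) ^ 2 ≤ Z := by
    have hsum : Summable (fun n : ℕ => 1 / (n : ℝ) ^ 2) :=
      Real.summable_one_div_nat_pow.mpr (by norm_num)
    exact ⟨_, fun N => hsum.sum_le_tsum _ (fun i _ => by positivity)⟩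
  -- bound for each s > 1
  have step1 : ∀ s : ℝ, 1 < s → ∀ M : ℕ,
      Real.exp (δ * ∑ p ∈ Nat.primesBelow M, (p : ℝ) ^ (-s) - K - 2 * Z) ≤ C := by
    intro s hs M
    let F : ℕ → ℝ := fun n => g n * (n : ℝ) ^ (-s)
    have Fw : ∀ n, F n = g n * auxW s n := by
      intro n
      rcases Nat.eq_zero_or_pos n with rfl | hn
      · simp [F, g0]
      · simp only [F]; rw [auxW_eq s hn]
    have hsum : Summable (fun n => ‖F n‖) := by
      refine Summable.of_nonneg_of_le (fun _ => norm_nonneg _) (fun n => ?_)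
        (Real.summable_nat_rpow.mpr (by linarith : -s < -1))
      simp only [F, norm_mul, Real.norm_eq_abs]
      rw [abs_of_nonneg (Real.rpow_nonneg (Nat.cast_nonneg n) (-s))]
      exact mul_le_of_le_one_left (Real.rpow_nonneg (Nat.cast_nonneg n) (-s)) (gabs n)
    have hEP := EulerProduct.eulerProduct (f := F) (by simp [F, g1])
      (fun {a b} h => by
        simp only [F]
        rw [gmul h, Nat.cast_mul, Real.mul_rpow (Nat.cast_nonneg _) (Nat.cast_nonneg _)]
        ring) hsum (by simp [F, g0])
    have hle : ∑' n, F n ≤ C := by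
      refine le_of_tendsto' hsum.of_norm.hasSum.tendsto_sum_nat (fun N => ?_)
      have := aux_abel (fun n => - g n) (auxW s) C
        (fun N => by rw [Finset.sum_neg_distrib]; linarith [hC N])
        (auxW_anti (by linarith)) (auxW_nonneg s) N
      rw [auxW_zero] at this
      simp only [neg_mul, Finset.sum_neg_distrib] at this
      simp only [Fw]
      linarith
    refine le_trans (ge_of_tendsto hEP ?_) hle
    filter_upwards [eventually_ge_atTop M] with N hN
    have hprod : ∏ p ∈ Nat.primesBelow N, Real.exp (F p - 2 * (F p) ^ 2) ≤
        ∏ p ∈ Nat.primesBelow N, ∑' e, F (p ^ e) := by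
      refine Finset.prod_le_prod (fun _ _ => (Real.exp_pos _).le) (fun p hp => ?_)
      have hpp := Nat.prime_of_mem_primesBelow hp
      have h1 : ∑' e, F (p ^ e) = 1 + F p := by
        rw [tsum_eq_sum (s := Finset.range 2)]
        · simp [Finset.sum_range_succ, F, g1]
        · intro e he
          simp only [Finset.mem_range, not_lt] at he
          simp only [F]
          rw [gpow p hpp e he, zero_mul]
      rw [h1]
      apply aux_exp
      have h2 : |F p| ≤ 1 / 2 := by
        simp only [F, abs_mul]
        rw [abs_of_nonneg (Real.rpow_nonneg (Nat.cast_nonneg p) (-s))]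
        refine le_trans (mul_le_of_le_one_left (Real.rpow_nonneg (Nat.cast_nonneg p) (-s))
          (gabs p)) ?_
        have h2p : (2 : ℝ) ≤ p := by exact_mod_cast hpp.two_le
        calc (p : ℝ) ^ (-s) ≤ (p : ℝ) ^ (-1 : ℝ) :=
              Real.rpow_le_rpow_of_exponent_le (by linarith) (by linarith)
          _ = 1 / p := by rw [Real.rpow_neg_one, one_div]
          _ ≤ 1 / 2 := one_div_le_one_div_of_le (by norm_num) h2p
      linarith [(abs_le.mp h2).1]
    refine le_trans ?_ hprod
    rw [← Real.exp_sum, Real.exp_le_exp, Finset.sum_sub_distrib]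
    have hb := aux_abel _ (auxW s) K hK (auxW_anti (by linarith)) (auxW_nonneg s) N
    rw [auxW_zero] at hb
    have hb2 : ∑ i ∈ Finset.range N, (if i.Prime then g i - δ else 0) * auxW s i
        = ∑ p ∈ Nat.primesBelow N, F p - δ * ∑ p ∈ Nat.primesBelow N, (p : ℝ) ^ (-s) := by
      rw [Finset.mul_sum, ← Finset.sum_sub_distrib, Nat.primesBelow, Finset.sum_filter]
      refine Finset.sum_congr rfl (fun i _ => ?_)
      split_ifs with h
      · rw [auxW_eq s h.one_le]; simp only [F]; ring
      · ring
    have hmono : ∑ p ∈ Nat.primesBelow M, (p : ℝ) ^ (-s) ≤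
        ∑ p ∈ Nat.primesBelow N, (p : ℝ) ^ (-s) := by
      refine Finset.sum_le_sum_of_subset_of_nonneg ?_
        (fun _ _ _ => Real.rpow_nonneg (Nat.cast_nonneg _) _)
      intro p hp
      rw [Nat.mem_primesBelow] at hp ⊢
      exact ⟨by omega, hp.2⟩
    have hsq : ∑ p ∈ Nat.primesBelow N, 2 * (F p) ^ 2 ≤ 2 * Z := by
      rw [← Finset.mul_sum]
      refine mul_le_mul_of_nonneg_left (le_trans ?_ (hZ N)) (by norm_num)
      refine le_trans (Finset.sum_le_sum (g := fun p : ℕ => 1 / (p : ℝ) ^ 2) fun p hp => ?_)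
        (Finset.sum_le_sum_of_subset_of_nonneg (Finset.filter_subset _ _)
          (fun _ _ _ => by positivity))
      have hpp := Nat.prime_of_mem_primesBelow hp
      have h1p : (1 : ℝ) ≤ p := by exact_mod_cast hpp.one_le
      have h3 : |F p| ≤ 1 / p := by
        simp only [F, abs_mul]
        rw [abs_of_nonneg (Real.rpow_nonneg (Nat.cast_nonneg p) (-s))]
        refine le_trans (mul_le_of_le_one_left (Real.rpow_nonneg (Nat.cast_nonneg p) (-s))
          (gabs p)) ?_
        calc (p : ℝ) ^ (-s) ≤ (p : ℝ) ^ (-1 : ℝ) :=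
              Real.rpow_le_rpow_of_exponent_le h1p (by linarith)
          _ = 1 / p := by rw [Real.rpow_neg_one, one_div]
      rw [← sq_abs, ← one_div_pow]
      exact pow_le_pow_left₀ (abs_nonneg _) h3 2
    have := mul_le_mul_of_nonneg_left hmono hδ.le
    linarith
  have step2 : ∀ M : ℕ,
      Real.exp (δ * ∑ p ∈ Nat.primesBelow M, 1 / (p : ℝ) - K - 2 * Z) ≤ C := by
    intro M
    have hcont : ContinuousAt (fun s : ℝ =>
        Real.exp (δ * ∑ p ∈ Nat.primesBelow M, (p : ℝ) ^ (-s) - K - 2 * Z)) 1 := by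
      refine Real.continuous_exp.continuousAt.comp ?_
      refine ContinuousAt.sub (ContinuousAt.sub (ContinuousAt.mul continuousAt_const ?_)
        continuousAt_const) continuousAt_const
      refine tendsto_finsetSum _ (fun p hp => ?_)
      have hpp := Nat.prime_of_mem_primesBelow hp
      have h0 : (p : ℝ) ≠ 0 := by exact_mod_cast hpp.ne_zero
      exact ContinuousAt.rpow continuousAt_const continuousAt_neg (Or.inl h0)
    have ht := hcont.tendsto.mono_left (nhdsWithin_le_nhds (s := Set.Ioi 1))
    have h := le_of_tendsto ht (by
      filter_upwards [self_mem_nhdsWithin] with s hs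
      exact step1 s hs M)
    simpa [Real.rpow_neg_one] using h
  have hCpos : 0 < C := lt_of_lt_of_le (Real.exp_pos _) (step2 0)
  apply not_summable_one_div_on_primes
  refine summable_of_sum_range_le (c := (Real.log C + K + 2 * Z) / δ)
    (fun n => Set.indicator_nonneg (fun _ _ => by positivity) n) (fun M => ?_)
  have h := step2 M
  rw [← Real.le_log_iff_exp_le hCpos] at h
  have e : ∑ i ∈ Finset.range M, Set.indicator {p : ℕ | p.Prime} (fun n : ℕ => (1 / n : ℝ)) i
      = ∑ p ∈ Nat.primesBelow M, 1 / (p : ℝ) := by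
    rw [Nat.primesBelow, Finset.sum_filter]
    exact Finset.sum_congr rfl (fun i _ => by simp [Set.indicator_apply])
  rw [e, le_div_iff₀ hδ]
  linarith

/-- The lower bound for the prime sums. -/
lemma aux_primes (f : ℕ → ℤ) (hfpm : ∀ n : ℕ, 1 ≤ n → f n = 1 ∨ f n = -1)
    (c : ℝ) (hc : c < 0)
    (hasymp : (fun x : ℝ => (∑ p ∈ Nat.primesBelow (⌊x⌋₊ + 1), (f p : ℝ))
        - c * (x / Real.log x)) =o[atTop] (fun x : ℝ => x / Real.log x)) :
    ∃ δ K : ℝ, 0 < δ ∧ ∀ N, -K ≤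
      ∑ i ∈ Finset.range N, (if i.Prime then -(f i : ℝ) - δ else 0) := by
  have hL : 0 < Real.log 4 + 1 := by
    have := Real.log_pos (by norm_num : (1 : ℝ) < 4)
    linarith
  let δ : ℝ := (-c / 2) / (Real.log 4 + 1)
  have hδ : 0 < δ := div_pos (by linarith) hL
  have hev := (hasymp.def (show 0 < -c / 2 by linarith)).and
    ((Chebyshev.eventually_primeCounting_le (ε := 1) one_pos).and (eventually_gt_atTop 1))
  have hevN := tendsto_natCast_atTop_atTop.eventually hev
  obtain ⟨N₀, hN₀⟩ := eventually_atTop.mp hevN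
  refine ⟨δ, (1 + δ) * (N₀ + 1), hδ, fun N => ?_⟩
  rcases lt_or_ge N (N₀ + 1) with hN | hN
  · have : ∑ i ∈ Finset.range N, (-(1 + δ)) ≤
        ∑ i ∈ Finset.range N, (if i.Prime then -(f i : ℝ) - δ else 0) := by
      refine Finset.sum_le_sum (fun i _ => ?_)
      split_ifs with h
      · rcases hfpm i h.one_le with h | h <;> rw [h] <;> push_cast <;> linarith
      · linarith
    refine le_trans ?_ this
    rw [Finset.sum_const, Finset.card_range, nsmul_eq_mul]
    have hN' : (N : ℝ) ≤ N₀ + 1 := by exact_mod_cast hN.le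
    nlinarith
  · obtain ⟨n, rfl⟩ : ∃ n, N = n + 1 := ⟨N - 1, by omega⟩
    obtain ⟨h1, h2, h3⟩ := hN₀ n (by omega)
    have hpos : 0 < (n : ℝ) / Real.log n := div_pos (by linarith) (Real.log_pos h3)
    rw [Nat.floor_natCast, Real.norm_eq_abs, Real.norm_eq_abs, abs_of_pos hpos] at h1
    rw [Nat.floor_natCast] at h2
    have h4 := (abs_le.mp h1).2
    have e : ∑ i ∈ Finset.range (n + 1), (if i.Prime then -(f i : ℝ) - δ else 0)
        = - ∑ p ∈ Nat.primesBelow (n + 1), (f p : ℝ) - δ * Nat.primeCounting n := by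
      rw [← Finset.sum_filter, ← Nat.primesBelow, Finset.sum_sub_distrib, Finset.sum_neg_distrib,
        Finset.sum_const, nsmul_eq_mul, mul_comm δ, Nat.primesBelow_card_eq_primeCounting',
        Nat.primeCounting]
    rw [e]
    have h5 := mul_le_mul_of_nonneg_left h2 hδ.le
    have h6 : δ * ((Real.log 4 + 1) * n / Real.log n) = -c / 2 * (n / Real.log n) := by
      simp only [δ]
      field_simp
    have : 0 ≤ (1 + δ) * ((N₀ : ℝ) + 1) := by positivity
    linarith

/-- If `f` is multiplicative with values in `{-1, 1}`, `f (2^k) = 1` for some `k ≥ 1`,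
`c ∈ [-1, 0)`, and `∑_{p ≤ x} f p = c·(x/log x)·(1 + o(1))`, then the partial sums of
`μ·f` are unbounded. -/
theorem stmt_13 (f : ℕ → ℤ)
    (hf1 : f 1 = 1)
    (hfmul : ∀ a b : ℕ, Nat.Coprime a b → f (a * b) = f a * f b)
    (hfpm : ∀ n : ℕ, 1 ≤ n → f n = 1 ∨ f n = -1)
    (hf2 : ∃ k : ℕ, 1 ≤ k ∧ f (2 ^ k) = 1)
    (c : ℝ) (hc : c ∈ Set.Ico (-1 : ℝ) 0)
    (hasymp : (fun x : ℝ => (∑ p ∈ Nat.primesBelow (⌊x⌋₊ + 1), (f p : ℝ))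
        - c * (x / Real.log x)) =o[atTop] (fun x : ℝ => x / Real.log x)) :
    ∀ C : ℝ, ∃ N : ℕ,
      C < |((∑ n ∈ Finset.Icc 1 N, ArithmeticFunction.moebius n * f n : ℤ) : ℝ)| := by
  intro C
  by_contra! hcon
  obtain ⟨δ, K, hδ, hK⟩ := aux_primes f hfpm c hc.2 hasymp
  have hμ := ArithmeticFunction.isMultiplicative_moebius
  refine aux_main (fun n => ((ArithmeticFunction.moebius n * f n : ℤ) : ℝ)) (by simp)
    (by simp [hf1]) (fun {a b} h => ?_) (fun n => ?_) (fun p hp e he => ?_) C (fun N => ?_) δ K hδ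
    (fun N => ?_)
  · rw [hμ.map_mul_of_coprime h, hfmul a b h]
    push_cast
    ring
  · rcases Nat.eq_zero_or_pos n with rfl | hn
    · simp
    · rw [← Int.cast_abs, abs_mul]
      have h1 := ArithmeticFunction.abs_moebius_le_one (n := n)
      have h2 : |f n| = 1 := by rcases hfpm n hn with h | h <;> simp [h]
      rw [h2, mul_one]
      exact_mod_cast h1
  · rw [ArithmeticFunction.moebius_apply_prime_pow hp (by omega), if_neg (by omega)]
    simp
  · have hC0 : 0 ≤ C := le_trans (abs_nonneg _) (hcon 0)
    rcases Nat.eq_zero_or_pos N with rfl | hN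
    · simpa using hC0
    · obtain ⟨n, rfl⟩ : ∃ n, N = n + 1 := ⟨N - 1, by omega⟩
      refine le_trans (le_of_eq ?_) (le_trans (le_abs_self _) (hcon n))
      rw [Finset.range_eq_Ico, Finset.sum_eq_sum_Ico_succ_bot (by omega)]
      push_cast
      simp
      rfl
  · refine le_trans (hK N) (le_of_eq (Finset.sum_congr rfl fun i _ => ?_))
    split_ifs with h
    · rw [ArithmeticFunction.moebius_apply_prime h]
      simp
    · rfl
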